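/- Let A and B be nondegenerate SVNR-sets of dimension p on X = {x_1, …, x_n}. Then the Dice similarity measure satisfies: (1) 0 ≤ (A,B)_D ≤ 1; (2) (A,B)_D = (B,A)_D; (3) if t_A^i(x_j) = t_B^i(x_j), i_A^i(x_j) = i_B^i(x_j) and f_A^i(x_j) = f_B^i(x_j) for every j ∈ {1,…,n} and i ∈ {1,…,p}, then (A,B)_D = 1. -/

import Mathlib

open Finset

noncomputable def diceSVNR (n p : ℕ)
    (tA iA fA tB iB fB : Fin p → Fin n → ℝ) : ℝ :=
  (1 / ((n : ℝ) * (p : ℝ))) * ∑ j : Fin n, ∑ i : Fin p,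
    (2 * (tA i j * tB i j + iA i j * iB i j + fA i j * fB i j)) /
      ((tA i j ^ 2 + iA i j ^ 2 + fA i j ^ 2) + (tB i j ^ 2 + iB i j ^ 2 + fB i j ^ 2))

section DiceSimilarity

open scoped BigOperators RealInnerProductSpace

variable {ι E : Type*} [Fintype ι] [SeminormedAddCommGroup E] [InnerProductSpace ℝ E]

/-- The Dice similarity of two vectors, with value `0` when both have norm `0`. -/
noncomputable def diceSimilarity (x y : E) : ℝ :=
  2 * ⟪x, y⟫ / (‖x‖ ^ 2 + ‖y‖ ^ 2)

theorem diceSimilarity_comm (x y : E) : diceSimilarity x y = diceSimilarity y x := by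
  rw [diceSimilarity, diceSimilarity, real_inner_comm, add_comm]

theorem diceSimilarity_nonneg {x y : E} (h : 0 ≤ ⟪x, y⟫) : 0 ≤ diceSimilarity x y := by
  unfold diceSimilarity
  positivity

theorem diceSimilarity_le_one (x y : E) : diceSimilarity x y ≤ 1 := by
  have two_inner_le : 2 * ⟪x, y⟫ ≤ ‖x‖ ^ 2 + ‖y‖ ^ 2 := by
    linarith [norm_sub_sq_real x y, sq_nonneg ‖x - y‖]
  exact div_le_one_of_le₀ two_inner_le (by positivity)

theorem diceSimilarity_self {x : E} (hx : ‖x‖ ≠ 0) : diceSimilarity x x = 1 := by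
  rw [diceSimilarity, real_inner_self_eq_norm_sq, ← two_mul]
  exact div_self (by positivity)

/-- The Dice similarity measure of two finite families of vectors: the average of the Dice
similarities of corresponding members. -/
noncomputable def meanDiceSimilarity (a b : ι → E) : ℝ :=
  𝔼 k, diceSimilarity (a k) (b k)

theorem meanDiceSimilarity_comm (a b : ι → E) :
    meanDiceSimilarity a b = meanDiceSimilarity b a :=
  expect_congr rfl fun k _ => diceSimilarity_comm (a k) (b k)

theorem meanDiceSimilarity_nonneg {a b : ι → E} (h : ∀ k, 0 ≤ ⟪a k, b k⟫) :
    0 ≤ meanDiceSimilarity a b :=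
  expect_nonneg fun k _ => diceSimilarity_nonneg (h k)

variable [Nonempty ι]

theorem meanDiceSimilarity_le_one (a b : ι → E) : meanDiceSimilarity a b ≤ 1 :=
  expect_le univ_nonempty fun k _ => diceSimilarity_le_one (a k) (b k)

theorem meanDiceSimilarity_self {a : ι → E} (ha : ∀ k, ‖a k‖ ≠ 0) :
    meanDiceSimilarity a a = 1 := by
  simp only [meanDiceSimilarity, diceSimilarity_self (ha _), Fintype.expect_const]

theorem stmt_1_general (a b : ι → E) (h_inner : ∀ k, 0 ≤ ⟪a k, b k⟫)
    (hnd : ∀ k, ¬(‖a k‖ = 0 ∧ ‖b k‖ = 0)) :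
    (0 ≤ meanDiceSimilarity a b ∧ meanDiceSimilarity a b ≤ 1) ∧
    meanDiceSimilarity a b = meanDiceSimilarity b a ∧
    ((∀ k, a k = b k) → meanDiceSimilarity a b = 1) := by
  refine ⟨⟨meanDiceSimilarity_nonneg h_inner, meanDiceSimilarity_le_one a b⟩,
    meanDiceSimilarity_comm a b, fun h => ?_⟩
  obtain rfl : a = b := funext h
  exact meanDiceSimilarity_self fun k hk => hnd k ⟨hk, hk⟩

end DiceSimilarity

section SVNR

open scoped RealInnerProductSpace

/-- The truth, indeterminacy and falsity degrees of one component of an SVNR-set at one element,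
as a vector of Euclidean space. -/
noncomputable def neutrosophicTriple (t i f : ℝ) : EuclideanSpace ℝ (Fin 3) :=
  !₂[t, i, f]

variable (t i f t' i' f' : ℝ)

theorem inner_neutrosophicTriple :
    ⟪neutrosophicTriple t i f, neutrosophicTriple t' i' f'⟫ = t * t' + i * i' + f * f' := by
  simp [neutrosophicTriple, PiLp.inner_apply, Fin.sum_univ_three, mul_comm]

theorem norm_sq_neutrosophicTriple :
    ‖neutrosophicTriple t i f‖ ^ 2 = t ^ 2 + i ^ 2 + f ^ 2 := by
  simp [neutrosophicTriple, EuclideanSpace.real_norm_sq_eq, Fin.sum_univ_three]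

theorem neutrosophicTriple_inj :
    neutrosophicTriple t i f = neutrosophicTriple t' i' f' ↔ t = t' ∧ i = i' ∧ f = f' := by
  simp [neutrosophicTriple]

theorem neutrosophicTriple_eq_zero :
    neutrosophicTriple t i f = 0 ↔ t = 0 ∧ i = 0 ∧ f = 0 := by
  simp [neutrosophicTriple]

/-- An SVNR-set as the family of its neutrosophic triples, indexed by the pairs of a component
and an element. -/
noncomputable def svnrTriples {n p : ℕ} (t i f : Fin p → Fin n → ℝ) (k : Fin p × Fin n) :
    EuclideanSpace ℝ (Fin 3) :=
  neutrosophicTriple (t k.1 k.2) (i k.1 k.2) (f k.1 k.2)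

theorem diceSVNR_eq_meanDiceSimilarity {n p : ℕ} (tA iA fA tB iB fB : Fin p → Fin n → ℝ) :
    diceSVNR n p tA iA fA tB iB fB =
      meanDiceSimilarity (svnrTriples tA iA fA) (svnrTriples tB iB fB) := by
  simp only [diceSVNR, meanDiceSimilarity, diceSimilarity, svnrTriples,
    inner_neutrosophicTriple, norm_sq_neutrosophicTriple, Fintype.expect_eq_sum_div_card,
    Fintype.sum_prod_type_right, Fintype.card_prod, Fintype.card_fin, Nat.cast_mul]
  rw [one_div_mul_eq_div, mul_comm (n : ℝ)]

end SVNR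

theorem stmt_1
    (n p : ℕ) (hn : 1 ≤ n) (hp : 1 ≤ p)
    (tA iA fA tB iB fB : Fin p → Fin n → ℝ)
    (htA : ∀ i j, tA i j ∈ Set.Icc (0 : ℝ) 1)
    (hiA : ∀ i j, iA i j ∈ Set.Icc (0 : ℝ) 1)
    (hfA : ∀ i j, fA i j ∈ Set.Icc (0 : ℝ) 1)
    (htB : ∀ i j, tB i j ∈ Set.Icc (0 : ℝ) 1)
    (hiB : ∀ i j, iB i j ∈ Set.Icc (0 : ℝ) 1)
    (hfB : ∀ i j, fB i j ∈ Set.Icc (0 : ℝ) 1)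
    (hnd : ∀ i j, ¬((tA i j = 0 ∧ iA i j = 0 ∧ fA i j = 0) ∧
                      (tB i j = 0 ∧ iB i j = 0 ∧ fB i j = 0))) :
    (0 ≤ diceSVNR n p tA iA fA tB iB fB ∧ diceSVNR n p tA iA fA tB iB fB ≤ 1) ∧
    diceSVNR n p tA iA fA tB iB fB = diceSVNR n p tB iB fB tA iA fA ∧
    ((∀ i j, tA i j = tB i j ∧ iA i j = iB i j ∧ fA i j = fB i j) →
      diceSVNR n p tA iA fA tB iB fB = 1) := by
  have : Nonempty (Fin p × Fin n) := ⟨⟨0, hp⟩, ⟨0, hn⟩⟩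
  have inner_nonneg : ∀ k, 0 ≤ inner ℝ (svnrTriples tA iA fA k) (svnrTriples tB iB fB k) := by
    rintro ⟨i, j⟩
    rw [svnrTriples, svnrTriples, inner_neutrosophicTriple]
    exact add_nonneg (add_nonneg (mul_nonneg (htA i j).1 (htB i j).1)
      (mul_nonneg (hiA i j).1 (hiB i j).1)) (mul_nonneg (hfA i j).1 (hfB i j).1)
  have nondegenerate : ∀ k, ¬(‖svnrTriples tA iA fA k‖ = 0 ∧ ‖svnrTriples tB iB fB k‖ = 0) := by
    simpa only [svnrTriples, norm_eq_zero, neutrosophicTriple_eq_zero, Prod.forall] using hnd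
  simpa only [diceSVNR_eq_meanDiceSimilarity, svnrTriples, neutrosophicTriple_inj, Prod.forall]
    using stmt_1_general _ _ inner_nonneg nondegenerate
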